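/- Let ψ : ℝ_{>0} → ℝ_{>0} be a function with τ(ψ) = −b_n. If the function t ↦ ψ(t)·e^{−b_n t} is bounded on ℝ_{>0}, then S(ψ)^c = ∅, i.e., every g ∈ SL_n(ℝ) is ψ-Diophantine for the standard representation. -/

import Mathlib

open MeasureTheory Filter

attribute [local instance] Matrix.frobeniusNormedAddCommGroup

noncomputable section

/-- The Euclidean norm on `ι → ℝ`. -/
def eucNorm {ι : Type*} [Fintype ι] (v : ι → ℝ) : ℝ := Real.sqrt (∑ i, (v i) ^ 2)

/-- The first minimum of a set of vectors: the infimum of the Euclidean norms of its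
nonzero elements. -/
def firstMin {ι : Type*} [Fintype ι] (Λ : Set (ι → ℝ)) : ℝ :=
  sInf {r | ∃ v ∈ Λ, v ≠ 0 ∧ eucNorm v = r}

/-- The diagonal matrix `a_t = diag(e^{b₁ t}, …, e^{bₙ t})`. -/
def aMat {n : ℕ} (b : Fin n → ℝ) (t : ℝ) : Matrix (Fin n) (Fin n) ℝ :=
  Matrix.diagonal fun i => Real.exp (b i * t)

/-- The standard lattice `ℤ^ι` inside `ι → ℝ`. -/
def intLat (ι : Type*) [Fintype ι] : Set (ι → ℝ) :=
  {v | ∃ m : ι → ℤ, v = fun i => (m i : ℝ)}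

/-- `SL_n(ℝ)` as the set of real `n × n` matrices of determinant one. -/
def SLset (n : ℕ) : Set (Matrix (Fin n) (Fin n) ℝ) := {g | g.det = 1}

/-- The set of `ψ`-Diophantine elements of `SL_n(ℝ)` for the standard representation. -/
def SDio {n : ℕ} (b : Fin n → ℝ) (ψ : ℝ → ℝ) : Set (Matrix (Fin n) (Fin n) ℝ) :=
  {g | g ∈ SLset n ∧ ∃ C > 0, ∀ t > 0,
    C * ψ t ≤ firstMin ((fun v => (aMat b t * g).mulVec v) '' intLat (Fin n))}

/-- `τ(ψ) = liminf_{t → ∞} (-ln ψ(t))/t`, as an extended real number. -/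
def tauE (ψ : ℝ → ℝ) : EReal :=
  liminf (fun t : ℝ => ((-Real.log (ψ t) / t : ℝ) : EReal)) atTop


/-- Each coordinate is bounded by the Euclidean norm. -/
lemma abs_apply_le_eucNorm {ι : Type*} [Fintype ι] (v : ι → ℝ) (i : ι) :
    |v i| ≤ eucNorm v :=
  Real.abs_le_sqrt (Finset.single_le_sum (f := fun i => v i ^ 2) (fun j _ => sq_nonneg (v j))
    (Finset.mem_univ i))

/-- A nonzero integer vector is moved by `g` of determinant one and then by `a_t`, `t ≥ 0`, to a vector
whose norm is at least a fixed multiple of `e^{c t}`, for any lower bound `c` of the exponents. -/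
lemma exists_exp_le_mul_eucNorm {n : ℕ} {b : Fin n → ℝ} {c : ℝ} (hc : ∀ i, c ≤ b i)
    {g : Matrix (Fin n) (Fin n) ℝ} (hg : g.det = 1) :
    ∃ K > 0, ∀ t ≥ 0, ∀ m : Fin n → ℤ, m ≠ 0 →
      Real.exp (c * t) ≤ K * eucNorm ((aMat b t * g).mulVec fun i => (m i : ℝ)) := by
  have hinv : g⁻¹ * g = 1 := Matrix.nonsing_inv_mul g (by simp [hg])
  refine ⟨1 + ∑ j, ∑ i, |g⁻¹ j i|, by positivity, fun t ht m hm => ?_⟩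
  set N := eucNorm ((aMat b t * g).mulVec fun i => (m i : ℝ)) with hN
  have hN0 : 0 ≤ N := Real.sqrt_nonneg _
  obtain ⟨j, hj⟩ := Function.ne_iff.mp hm
  set w := g.mulVec fun i => (m i : ℝ) with hw
  have hmj : (m j : ℝ) = ∑ i, g⁻¹ j i * w i := by
    have h : g⁻¹.mulVec w = fun i => (m i : ℝ) := by
      rw [hw, Matrix.mulVec_mulVec, hinv, Matrix.one_mulVec]
    exact (congrFun h j).symm
  have hwN (i : Fin n) : Real.exp (c * t) * |w i| ≤ N := by
    have h := abs_apply_le_eucNorm ((aMat b t * g).mulVec fun i => (m i : ℝ)) i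
    rw [← Matrix.mulVec_mulVec, ← hw, aMat, Matrix.mulVec_diagonal, abs_mul, Real.abs_exp] at h
    rw [← Matrix.mulVec_mulVec, ← hw, aMat] at hN
    refine le_trans ?_ (h.trans_eq hN.symm)
    gcongr
    exact hc i
  have hone : (1 : ℝ) ≤ |(m j : ℝ)| := mod_cast Int.one_le_abs hj
  calc Real.exp (c * t) ≤ Real.exp (c * t) * |∑ i, g⁻¹ j i * w i| := by
        rw [← hmj]
        exact le_mul_of_one_le_right (Real.exp_pos _).le hone
    _ ≤ Real.exp (c * t) * ∑ i, |g⁻¹ j i| * |w i| := by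
        gcongr
        simpa only [abs_mul] using Finset.abs_sum_le_sum_abs (fun i => g⁻¹ j i * w i) Finset.univ
    _ = ∑ i, |g⁻¹ j i| * (Real.exp (c * t) * |w i|) := by
        rw [Finset.mul_sum]
        exact Finset.sum_congr rfl fun i _ => by ring
    _ ≤ ∑ i, |g⁻¹ j i| * N := by
        gcongr with i
        exact hwN i
    _ = (∑ i, |g⁻¹ j i|) * N := by rw [Finset.sum_mul]
    _ ≤ (1 + ∑ j, ∑ i, |g⁻¹ j i|) * N := by
        gcongr
        have h := Finset.single_le_sum (f := fun j => ∑ i, |g⁻¹ j i|)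
          (fun j _ => by positivity) (Finset.mem_univ j)
        linarith

theorem SDio_compl_standard_empty_of_bounded
    (n : ℕ) (hn : 2 ≤ n) (b : Fin n → ℝ)
    (hmono : ∀ i j : Fin n, i ≤ j → b j ≤ b i)
    (hsum : ∑ i, b i = 0) (hb : b ≠ 0)
    (ψ : ℝ → ℝ) (hψpos : ∀ t > 0, 0 < ψ t)
    (hτ : tauE ψ = ((-(b ⟨n - 1, by omega⟩) : ℝ) : EReal))
    (hbdd : ∃ M : ℝ, ∀ t > 0, ψ t * Real.exp (-(b ⟨n - 1, by omega⟩) * t) ≤ M) :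
    SLset n \ SDio b ψ = ∅ := by
  rw [Set.sdiff_eq_empty]
  intro g hg
  obtain ⟨M, hM⟩ := hbdd
  set c := b ⟨n - 1, by omega⟩
  have hc (i : Fin n) : c ≤ b i := hmono i _ (Fin.le_def.mpr (by simp only; omega))
  have hMpos : 0 < M := (mul_pos (hψpos 1 one_pos) (Real.exp_pos _)).trans_le (hM 1 one_pos)
  obtain ⟨K, hK, hbound⟩ := exists_exp_le_mul_eucNorm hc hg
  refine ⟨hg, (K * M)⁻¹, by positivity, fun t ht => le_csInf ?_ ?_⟩
  · have hm : (fun _ => 1 : Fin n → ℤ) ≠ 0 := fun h => one_ne_zero (congrFun h ⟨0, by omega⟩)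
    refine ⟨_, _, ⟨_, ⟨fun _ => 1, rfl⟩, rfl⟩, fun h => ?_, rfl⟩
    have hle := hbound t ht.le _ hm
    rw [show ((aMat b t * g).mulVec fun _ => ((1 : ℤ) : ℝ)) = 0 from h] at hle
    exact absurd hle (by simp [eucNorm, Real.exp_pos])
  · rintro r ⟨v, ⟨_, ⟨m, rfl⟩, rfl⟩, hv, rfl⟩
    have hm : m ≠ 0 := by
      rintro rfl
      refine hv ?_
      ext i
      simp [Matrix.mulVec, dotProduct]
    have hψ : ψ t ≤ M * Real.exp (c * t) := by
      have h := hM t ht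
      rwa [neg_mul, Real.exp_neg, ← div_eq_mul_inv, div_le_iff₀ (Real.exp_pos _)] at h
    rw [inv_mul_le_iff₀ (by positivity)]
    calc ψ t ≤ M * Real.exp (c * t) := hψ
      _ ≤ M * (K * _) := by gcongr; exact hbound t ht.le m hm
      _ = _ := by ring

end
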